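/- Let A be an associative k-algebra and a_1, …, a_m ∈ A. If P_{≥1}(a_1,…,a_m) ⊆ P_{≤ d−1}(a_1,…,a_m) for some d ≥ 1, then every element of the subspace k a_1 + … + k a_m is algebraic of degree at most M_{d,m}. -/

import Mathlib

/-- `pWord a i` is the polynomial `p_{i_1,…,i_m}(a_1,…,a_m)`: the sum, over all distinct
words in `m` letters containing exactly `i_j` occurrences of letter `j` for each `j`,
of the corresponding products of `a_1,…,a_m`. -/
noncomputable def pWord {A : Type*} [Ring A] {m : ℕ} (a : Fin m → A) (i : Fin m → ℕ) : A :=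
  ∑ w ∈ (Finset.univ : Finset (Fin (∑ j, i j) → Fin m)).filter
      (fun w => ∀ j, (List.ofFn w).count j = i j),
    ((List.ofFn w).map a).prod

/-- `Pdeg k a n` is `P_n(a_1,…,a_m)`, the `k`-span of
`{p_{i_1,…,i_m}(a_1,…,a_m) : i_1+…+i_m = n}`. -/
noncomputable def Pdeg (k : Type*) [Field k] {A : Type*} [Ring A] [Algebra k A]
    {m : ℕ} (a : Fin m → A) (n : ℕ) : Submodule k A :=
  Submodule.span k {x | ∃ i : Fin m → ℕ, (∑ j, i j) = n ∧ x = pWord a i}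

theorem pow_expand {k A : Type*} [Field k] [Ring A] [Algebra k A] {m : ℕ} (a : Fin m → A) (c : Fin m → k) (n : ℕ) :
    (∑ j, c j • a j) ^ n = ∑ w : Fin n → Fin m, ((List.ofFn w).map c).prod • ((List.ofFn w).map a).prod := by
  induction n with
  | zero => simp
  | succ n ih =>
    rw [pow_succ', ih, ← (Fin.consEquiv (fun _ => Fin m)).sum_comp, Fintype.sum_prod_type, Finset.sum_mul]
    refine Finset.sum_congr rfl fun j _ => ?_
    rw [Finset.mul_sum]
    refine Finset.sum_congr rfl fun w _ => ?_
    simp [Fin.consEquiv, List.ofFn_succ, smul_smul, mul_comm, Function.comp_def]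

theorem pWord_eq {A : Type*} [Ring A] {m : ℕ} (a : Fin m → A) (i : Fin m → ℕ) (n : ℕ) (hn : ∑ j, i j = n) :
    pWord a i = ∑ w ∈ (Finset.univ : Finset (Fin n → Fin m)).filter
      (fun w => (fun j => (List.ofFn w).count j) = i), ((List.ofFn w).map a).prod := by
  subst hn
  simp only [pWord, funext_iff]

theorem pow_mem_Pdeg {k A : Type*} [Field k] [Ring A] [Algebra k A] {m : ℕ} (a : Fin m → A) (c : Fin m → k) (n : ℕ) :
    (∑ j, c j • a j) ^ n ∈ Pdeg k a n := by
  classical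
  rw [pow_expand, ← Finset.sum_fiberwise_of_maps_to
    (t := Finset.univ.image (fun (w : Fin n → Fin m) (j : Fin m) => (List.ofFn w).count j))
    (fun w hw => Finset.mem_image_of_mem _ hw)]
  refine Submodule.sum_mem _ fun i hi => ?_
  obtain ⟨v, -, hv⟩ := Finset.mem_image.1 hi
  have hn : ∑ j, i j = n := by
    have := Multiset.sum_count_eq_card (s := Finset.univ) (m := (List.ofFn v : Multiset (Fin m))) (by simp)
    simpa [← hv] using this
  have : ∑ w ∈ (Finset.univ : Finset (Fin n → Fin m)).filter
      (fun w => (fun j => (List.ofFn w).count j) = i), ((List.ofFn w).map c).prod • ((List.ofFn w).map a).prod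
      = ((List.ofFn v).map c).prod • pWord a i := by
    rw [pWord_eq a i n hn, Finset.smul_sum]
    refine Finset.sum_congr rfl fun w hw => ?_
    congr 1
    apply List.Perm.prod_eq
    apply List.Perm.map
    rw [List.perm_iff_count]
    intro j
    exact congrFun ((Finset.mem_filter.1 hw).2.trans hv.symm) j
  rw [this]
  exact Submodule.smul_mem _ _ (Submodule.subset_span ⟨i, hn, rfl⟩)

theorem card_idx (m d : ℕ) (hd : 1 ≤ d) :
    ((Finset.Icc 1 (d-1)).biUnion fun n => Finset.piAntidiag (Finset.univ : Finset (Fin m)) n).card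
    ≤ (d + m - 1).choose m - 1 := by
  have h0 : ∀ n, (Finset.piAntidiag (Finset.univ : Finset (Fin m)) n).card = m.multichoose n := by
    intro n
    have := Finset.card_finsuppAntidiag_nat_eq_multichoose (s := (Finset.univ : Finset (Fin m))) n
    rw [Finset.card_univ, Fintype.card_fin] at this
    rw [← this]
    symm
    refine Finset.card_bij (fun (f : Fin m →₀ ℕ) _ => (f : Fin m → ℕ)) ?_ ?_ ?_
    · intro f hf
      simpa using hf
    · intro f _ g _ hfg
      exact DFunLike.coe_injective hfg
    · intro f hf
      exact ⟨Finsupp.equivFunOnFinite.symm f, by simpa using hf, by simp⟩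
  refine Finset.card_biUnion_le.trans ?_
  simp only [h0]
  obtain ⟨e, rfl⟩ : ∃ e, d = e + 1 := ⟨d - 1, by omega⟩
  have h1 : ∀ e, 1 + ∑ n ∈ Finset.Icc 1 e, m.multichoose n = (e + m).choose m := by
    intro e
    induction e with
    | zero => simp
    | succ e ih =>
      rw [Finset.sum_Icc_succ_top (by omega), ← add_assoc, ih]
      rcases m with _ | m
      · simp
      · rw [Nat.multichoose_eq, show e + 1 + (m + 1) = (e + (m + 1)) + 1 by ring, Nat.choose_succ_succ, add_comm]
        congr 1
        rw [show m + 1 + (e + 1) - 1 = (e + 1) + m by omega, show e + (m + 1) = (e + 1) + m by ring,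
          Nat.choose_symm_add]
  have := h1 e
  simp only [Nat.add_sub_cancel, show e + 1 + m - 1 = e + m by omega]
  omega

theorem top_of_dep {k A : Type*} [Field k] [Ring A] [Algebra k A] (u : A) (M : ℕ)
    (hdep : ¬ LinearIndependent k (fun t : Fin M => u ^ (t.1 + 1))) :
    u ^ M ∈ Submodule.span k ((fun i : ℕ => u ^ i) '' Set.Icc 1 (M - 1)) := by
  classical
  rw [Fintype.not_linearIndependent_iff] at hdep
  obtain ⟨g, hg, t0, ht0⟩ := hdep
  obtain ⟨t, ht, hmax⟩ := (Finset.univ.filter fun t => g t ≠ 0).exists_max_image id ⟨t0, by simpa using ht0⟩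
  have hgt : g t ≠ 0 := by simpa using ht
  have hz : ∀ s, t < s → g s = 0 := by
    intro s hs
    by_contra hne
    exact absurd (hmax s (by simpa using hne)) (not_le.2 hs)
  have h2 : g t • u ^ M = - ∑ s ∈ Finset.univ.erase t, g s • u ^ (s.1 + 1 + (M - 1 - t.1)) := by
    rw [eq_neg_iff_add_eq_zero]
    have := congrArg (· * u ^ (M - 1 - t.1)) hg
    simp only [Finset.sum_mul, smul_mul_assoc, ← pow_add, zero_mul] at this
    rw [← Finset.add_sum_erase _ _ (Finset.mem_univ t)] at this
    rwa [show t.1 + 1 + (M - 1 - t.1) = M by omega] at this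
  rw [← Submodule.smul_mem_iff _ hgt, h2]
  refine Submodule.neg_mem _ (Submodule.sum_mem _ fun s hs => ?_)
  rcases lt_or_ge t s with hts | hts
  · simp [hz s hts]
  · refine Submodule.smul_mem _ _ (Submodule.subset_span ⟨_, ?_, rfl⟩)
    have hne : s ≠ t := (Finset.mem_erase.1 hs).1
    have : s < t := lt_of_le_of_ne hts hne
    have : s.1 < t.1 := this
    have := t.2
    simp only [Set.mem_Icc]
    omega

/-- If `P_{≥1}(a_1,…,a_m) ⊆ P_{≤ d−1}(a_1,…,a_m)` for some `d ≥ 1`, then every element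
of the subspace `k a_1 + … + k a_m` is algebraic of degree at most
`M_{d,m} = C(d+m−1, m)`. -/
theorem algebraic_of_Pge_le_Ple
    (k : Type*) [Field k] (A : Type*) [Ring A] [Algebra k A]
    (m d : ℕ) (hd : 1 ≤ d) (a : Fin m → A)
    (h : (⨆ n ∈ Set.Ici 1, Pdeg k a n) ≤ ⨆ n ∈ Finset.Icc 1 (d - 1), Pdeg k a n) :
    ∀ u ∈ Submodule.span k (Set.range a),
      u ^ ((d + m - 1).choose m) ∈
        Submodule.span k ((fun i : ℕ => u ^ i) '' Set.Icc 1 ((d + m - 1).choose m - 1)) := by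
  classical
  intro u hu
  obtain ⟨c, rfl⟩ := (Submodule.mem_span_range_iff_exists_fun k).1 hu
  apply top_of_dep
  intro hli
  set T := (Finset.Icc 1 (d-1)).biUnion fun n => Finset.piAntidiag (Finset.univ : Finset (Fin m)) n with hT
  have hle : (⨆ n ∈ Finset.Icc 1 (d - 1), Pdeg k a n) ≤
      Submodule.span k ((T.image (pWord a) : Finset A) : Set A) := by
    refine iSup₂_le fun n hn => Submodule.span_mono ?_
    rintro x ⟨i, hi, rfl⟩
    simp only [Finset.coe_image]
    refine ⟨i, ?_, rfl⟩
    simp only [hT, Finset.coe_biUnion, Set.mem_iUnion]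
    exact ⟨n, by simpa using hn, by simpa using hi⟩
  have hmem : ∀ n, 1 ≤ n → (∑ j, c j • a j) ^ n ∈
      Submodule.span k ((T.image (pWord a) : Finset A) : Set A) := fun n hn =>
    hle (h (Submodule.mem_iSup_of_mem n (Submodule.mem_iSup_of_mem hn (pow_mem_Pdeg a c n))))
  have hle2 : Submodule.span k (Set.range (fun t : Fin ((d + m - 1).choose m) =>
      (∑ j, c j • a j) ^ (t.1 + 1))) ≤ Submodule.span k ((T.image (pWord a) : Finset A) : Set A) := by
    rw [Submodule.span_le]
    rintro _ ⟨t, rfl⟩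
    exact hmem _ (by omega)
  have h1 := Submodule.finrank_mono hle2
  rw [finrank_span_eq_card hli, Fintype.card_fin] at h1
  have h2 := (h1.trans (finrank_span_finset_le_card _)).trans
    (Finset.card_image_le.trans (card_idx m d hd))
  have h3 : 0 < (d + m - 1).choose m := Nat.choose_pos (by omega)
  omega
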